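/- arXiv:2108.09005 — 3 statements merged into one kernel-verified Lean document; each statement's English description precedes it below -/
import Mathlib

section
/- Let ν₀ = N(m₀, σ₀²) and ν₁ = N(m₁, σ₁²) be Gaussian measures on ℝ with σ₀, σ₁ > 0 and σ₀ ≠ σ₁. Then the classification error of the 1D QDA rule φ equals 𝓔((m₀ − m₁)/σ₁, σ₀/σ₁). -/
open MeasureTheory ProbabilityTheory Matrix Filter Set

noncomputable def Phi (t : ℝ) : ℝ := ((gaussianReal 0 1) (Set.Iic t)).toReal
noncomputable def calE (r g : ℝ) : ℝ :=
  if g = 1 then Phi (-(|r| / 2))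
  else
    1/2
      + (1/2) * Phi ((r - g * Real.sqrt (r^2 + (g^2 - 1) * Real.log (g^2))) / (g^2 - 1))
      - (1/2) * Phi ((r + g * Real.sqrt (r^2 + (g^2 - 1) * Real.log (g^2))) / (g^2 - 1))
      + (1/2) * Phi ((r * g + Real.sqrt (r^2 + (g^2 - 1) * Real.log (g^2))) / (g^2 - 1))
      - (1/2) * Phi ((r * g - Real.sqrt (r^2 + (g^2 - 1) * Real.log (g^2))) / (g^2 - 1))
noncomputable def qdaDelta (m σ : ℝ) (x : ℝ) : ℝ :=
  -(1/2) * Real.log (σ^2) - (x - m)^2 / (2 * σ^2) + Real.log (1/2)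

noncomputable def qdaRule (m0 σ0 m1 σ1 : ℝ) (x : ℝ) : ℕ :=
  if qdaDelta m0 σ0 x < qdaDelta m1 σ1 x then 1 else 0

noncomputable def classError (m0 σ0 m1 σ1 : ℝ) : ℝ :=
  (1/2) * ((gaussianReal m0 (σ0^2).toNNReal) {x | qdaRule m0 σ0 m1 σ1 x = 1}).toReal
  + (1/2) * ((gaussianReal m1 (σ1^2).toNNReal) {x | qdaRule m0 σ0 m1 σ1 x = 0}).toReal

/-!
Substituting `x = m_k - σ_k w` turns class `k` into a standard Gaussian and, with
`r = (m₀ - m₁)/σ₁` and `g = σ₀/σ₁`, turns `δ₁ > δ₀` into a quadratic inequality in `w` whose leading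
coefficient is `g² - 1` for both classes. The roots are the arguments of `Φ` in `𝓔(r, g)`; the
minus sign in the substitution gives them the same orientation as there. For `g < 1` the region is
the complement of an interval instead of an interval, which adds `1` to both probabilities; these
cancel, since class `0` is misclassified inside the region and class `1` outside it.
-/

section QuadraticInequality

variable {K : Type*} [Field K] {a b c t : K}

lemma quadratic_eq_mul_sub_mul_sub (ha : a ≠ 0) (ht : b ^ 2 - a * c = t ^ 2) (x : K) :
    a * x ^ 2 - 2 * b * x + c = a * ((x - (b - t) / a) * (x - (b + t) / a)) := by
  field_simp
  linear_combination -ht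

variable [LinearOrder K] [IsStrictOrderedRing K]

lemma ofPred_quadratic_neg_of_pos (ha : 0 < a) (ht₀ : 0 ≤ t) (ht : b ^ 2 - a * c = t ^ 2) :
    {x | a * x ^ 2 - 2 * b * x + c < 0} = Ioo ((b - t) / a) ((b + t) / a) := by
  have hle : (b - t) / a ≤ (b + t) / a := by gcongr; linarith
  ext x
  rw [mem_ofPred_eq, mem_Ioo, quadratic_eq_mul_sub_mul_sub ha.ne' ht,
    ← smul_eq_mul, smul_neg_iff_of_pos_left ha, sub_mul_sub_neg_iff x hle]

lemma ofPred_quadratic_neg_of_neg (ha : a < 0) (ht₀ : 0 ≤ t) (ht : b ^ 2 - a * c = t ^ 2) :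
    {x | a * x ^ 2 - 2 * b * x + c < 0} = (Icc ((b + t) / a) ((b - t) / a))ᶜ := by
  have hle : (b + t) / a ≤ (b - t) / a := (div_le_div_right_of_neg ha).2 (by linarith)
  ext x
  rw [mem_ofPred_eq, mem_compl_iff, mem_Icc, quadratic_eq_mul_sub_mul_sub ha.ne ht,
    ← smul_eq_mul, smul_neg_iff_of_neg_left ha, mul_comm, sub_mul_sub_pos_iff x hle,
    not_and_or, not_le, not_le]

end QuadraticInequality

section Cdf

variable (μ : Measure ℝ) [IsProbabilityMeasure μ]

lemma measureReal_Ioc_eq_cdf_sub_cdf {a b : ℝ} (h : a ≤ b) :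
    μ.real (Ioc a b) = cdf μ b - cdf μ a := by
  rw [← Iic_sdiff_Iic, measureReal_sdiff (Iic_subset_Iic.2 h) measurableSet_Iic,
    cdf_eq_real, cdf_eq_real]

lemma measureReal_ofPred_quadratic_neg [NullSingletonClass μ] {a b c t : ℝ} (ha : a ≠ 0)
    (ht₀ : 0 ≤ t) (ht : b ^ 2 - a * c = t ^ 2) :
    μ.real {x | a * x ^ 2 - 2 * b * x + c < 0} =
      (if a < 0 then 1 else 0) + cdf μ ((b + t) / a) - cdf μ ((b - t) / a) := by
  rcases ha.lt_or_gt with ha | ha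
  · have hle : (b + t) / a ≤ (b - t) / a := (div_le_div_right_of_neg ha).2 (by linarith)
    rw [ofPred_quadratic_neg_of_neg ha ht₀ ht, probReal_compl_eq_one_sub measurableSet_Icc,
      ← measureReal_congr Ioc_ae_eq_Icc, measureReal_Ioc_eq_cdf_sub_cdf μ hle, if_pos ha]
    ring
  · have hle : (b - t) / a ≤ (b + t) / a := by gcongr; linarith
    rw [ofPred_quadratic_neg_of_pos ha ht₀ ht, measureReal_congr Ioo_ae_eq_Ioc,
      measureReal_Ioc_eq_cdf_sub_cdf μ hle, if_neg ha.not_gt, zero_add]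

end Cdf

section StandardGaussian

lemma Phi_eq_cdf (t : ℝ) : Phi t = cdf (gaussianReal 0 1) t :=
  (cdf_eq_real _ t).symm

lemma gaussianReal_eq_map_sub_mul (m σ : ℝ) :
    gaussianReal m (σ ^ 2).toNNReal = (gaussianReal 0 1).map (fun w ↦ m - σ * w) := by
  have hcomp : (fun w ↦ m - σ * w) = (fun x ↦ m - x) ∘ (fun w ↦ σ * w) := rfl
  rw [hcomp, ← Measure.map_map (by fun_prop) (by fun_prop), gaussianReal_map_const_mul,
    gaussianReal_map_const_sub, mul_zero, sub_zero, mul_one,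
    Real.toNNReal_of_nonneg (sq_nonneg σ)]

lemma measureReal_gaussianReal_eq_standard (m σ : ℝ) {s : Set ℝ} (hs : MeasurableSet s) :
    (gaussianReal m (σ ^ 2).toNNReal).real s =
      (gaussianReal 0 1).real {w | m - σ * w ∈ s} := by
  rw [gaussianReal_eq_map_sub_mul, map_measureReal_apply (by fun_prop) hs]
  rfl

lemma measureReal_standardGaussian_ofPred_quadratic_neg {a b c t : ℝ} (ha : a ≠ 0)
    (ht₀ : 0 ≤ t) (ht : b ^ 2 - a * c = t ^ 2) :
    (gaussianReal 0 1).real {w | a * w ^ 2 - 2 * b * w + c < 0} =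
      (if a < 0 then 1 else 0) + Phi ((b + t) / a) - Phi ((b - t) / a) := by
  have := nullSingletonClass_gaussianReal (μ := 0) one_ne_zero
  rw [Phi_eq_cdf, Phi_eq_cdf, measureReal_ofPred_quadratic_neg _ ha ht₀ ht]

end StandardGaussian

section Discriminant

lemma sub_one_mul_log_nonneg {x : ℝ} (hx : 0 ≤ x) : 0 ≤ (x - 1) * Real.log x := by
  rcases le_total 1 x with h | h
  · exact mul_nonneg (sub_nonneg.2 h) (Real.log_nonneg h)
  · exact mul_nonneg_of_nonpos_of_nonpos (sub_nonpos.2 h) (Real.log_nonpos hx h)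

/-- The quantity `Δ(r, g)` under the square roots of `𝓔(r, g)`. Up to the factors `4` and `4 g²` it
is the discriminant of the quadratics cutting out the decision region in the coordinates of class
`0` and class `1`, respectively. -/
noncomputable def qdaDiscrim (r g : ℝ) : ℝ :=
  r ^ 2 + (g ^ 2 - 1) * Real.log (g ^ 2)

lemma qdaDiscrim_nonneg (r g : ℝ) : 0 ≤ qdaDiscrim r g :=
  add_nonneg (sq_nonneg r) (sub_one_mul_log_nonneg (sq_nonneg g))

lemma calE_of_ne_one (r : ℝ) {g : ℝ} (hg : g ≠ 1) :
    calE r g = 1 / 2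
      + (1 / 2) * Phi ((r - g * √(qdaDiscrim r g)) / (g ^ 2 - 1))
      - (1 / 2) * Phi ((r + g * √(qdaDiscrim r g)) / (g ^ 2 - 1))
      + (1 / 2) * Phi ((r * g + √(qdaDiscrim r g)) / (g ^ 2 - 1))
      - (1 / 2) * Phi ((r * g - √(qdaDiscrim r g)) / (g ^ 2 - 1)) :=
  if_neg hg

end Discriminant

section DecisionRegion

lemma qdaRule_eq_one_iff {σ0 σ1 : ℝ} (h0 : σ0 ≠ 0) (h1 : σ1 ≠ 0) (m0 m1 x : ℝ) :
    qdaRule m0 σ0 m1 σ1 x = 1 ↔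
      ((x - m1) / σ1) ^ 2 - ((x - m0) / σ0) ^ 2 - Real.log ((σ0 / σ1) ^ 2) < 0 := by
  have hdiff : qdaDelta m0 σ0 x - qdaDelta m1 σ1 x =
      (1 / 2) * (((x - m1) / σ1) ^ 2 - ((x - m0) / σ0) ^ 2 - Real.log ((σ0 / σ1) ^ 2)) := by
    rw [qdaDelta, qdaDelta, div_pow σ0, Real.log_div (pow_ne_zero 2 h0) (pow_ne_zero 2 h1)]
    ring
  rw [qdaRule, ite_eq_left_iff, imp_iff_not zero_ne_one, not_not]
  constructor <;> intro h <;> linarith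

lemma qdaRule_eq_zero_iff_ne_one (m0 σ0 m1 σ1 x : ℝ) :
    qdaRule m0 σ0 m1 σ1 x = 0 ↔ qdaRule m0 σ0 m1 σ1 x ≠ 1 := by
  unfold qdaRule
  split_ifs <;> simp

lemma measurableSet_qdaRule_eq_one (m0 σ0 m1 σ1 : ℝ) :
    MeasurableSet {x | qdaRule m0 σ0 m1 σ1 x = 1} := by
  have hset : {x | qdaRule m0 σ0 m1 σ1 x = 1} = {x | qdaDelta m0 σ0 x < qdaDelta m1 σ1 x} := by
    ext x
    simp [qdaRule]
  rw [hset]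
  unfold qdaDelta
  exact measurableSet_lt (by fun_prop) (by fun_prop)

lemma classError_eq_measureReal_qdaRule_eq_one (m0 σ0 m1 σ1 : ℝ) :
    classError m0 σ0 m1 σ1 =
      (1 / 2) * (gaussianReal m0 (σ0 ^ 2).toNNReal).real {x | qdaRule m0 σ0 m1 σ1 x = 1}
      + (1 / 2) * (1 - (gaussianReal m1 (σ1 ^ 2).toNNReal).real
          {x | qdaRule m0 σ0 m1 σ1 x = 1}) := by
  rw [← probReal_compl_eq_one_sub (measurableSet_qdaRule_eq_one m0 σ0 m1 σ1), compl_ofPred]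
  simp only [classError, qdaRule_eq_zero_iff_ne_one, measureReal_def, ne_eq]

variable {r g σ : ℝ}

lemma qdaRule_sub_mul_eq_one_iff_of_class_zero (hg : g ≠ 0) (hσ : σ ≠ 0) (m w : ℝ) :
    qdaRule (m + r * σ) (g * σ) m σ (m + r * σ - g * σ * w) = 1 ↔
      (g ^ 2 - 1) * w ^ 2 - 2 * (r * g) * w + (r ^ 2 - Real.log (g ^ 2)) < 0 := by
  have hz₁ : (m + r * σ - g * σ * w - m) / σ = r - g * w := by field_simp; ring
  have hz₀ : (m + r * σ - g * σ * w - (m + r * σ)) / (g * σ) = -w := by field_simp; ring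
  rw [qdaRule_eq_one_iff (mul_ne_zero hg hσ) hσ, hz₁, hz₀, mul_div_cancel_right₀ g hσ]
  ring_nf

lemma qdaRule_sub_mul_eq_one_iff_of_class_one (hg : g ≠ 0) (hσ : σ ≠ 0) (m w : ℝ) :
    qdaRule (m + r * σ) (g * σ) m σ (m - σ * w) = 1 ↔
      (g ^ 2 - 1) * w ^ 2 - 2 * r * w + (-r ^ 2 - g ^ 2 * Real.log (g ^ 2)) < 0 := by
  have hz₁ : (m - σ * w - m) / σ = -w := by field_simp; ring
  have hz₀ : (m - σ * w - (m + r * σ)) / (g * σ) = -(w + r) / g := by field_simp; ring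
  have hscale : (g ^ 2 - 1) * w ^ 2 - 2 * r * w + (-r ^ 2 - g ^ 2 * Real.log (g ^ 2)) =
      g ^ 2 * ((-w) ^ 2 - (-(w + r) / g) ^ 2 - Real.log (g ^ 2)) := by
    field_simp
    ring
  rw [qdaRule_eq_one_iff (mul_ne_zero hg hσ) hσ, hz₁, hz₀, mul_div_cancel_right₀ g hσ, hscale,
    ← smul_eq_mul (g ^ 2), smul_neg_iff_of_pos_left (by positivity)]

lemma measureReal_class_zero_qdaRule_eq_one (hg : g ≠ 0) (hg₁ : g ^ 2 ≠ 1) (hσ : σ ≠ 0) (m : ℝ) :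
    (gaussianReal (m + r * σ) ((g * σ) ^ 2).toNNReal).real
        {x | qdaRule (m + r * σ) (g * σ) m σ x = 1} =
      (if g ^ 2 - 1 < 0 then 1 else 0)
        + Phi ((r * g + √(qdaDiscrim r g)) / (g ^ 2 - 1))
        - Phi ((r * g - √(qdaDiscrim r g)) / (g ^ 2 - 1)) := by
  have hdisc : (r * g) ^ 2 - (g ^ 2 - 1) * (r ^ 2 - Real.log (g ^ 2)) = √(qdaDiscrim r g) ^ 2 := by
    rw [Real.sq_sqrt (qdaDiscrim_nonneg r g), qdaDiscrim]
    ring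
  rw [measureReal_gaussianReal_eq_standard _ _ (measurableSet_qdaRule_eq_one _ _ _ _)]
  simp only [mem_ofPred_eq, qdaRule_sub_mul_eq_one_iff_of_class_zero hg hσ]
  exact measureReal_standardGaussian_ofPred_quadratic_neg (sub_ne_zero.2 hg₁)
    (Real.sqrt_nonneg _) hdisc

lemma measureReal_class_one_qdaRule_eq_one (hg : 0 < g) (hg₁ : g ^ 2 ≠ 1) (hσ : σ ≠ 0) (m : ℝ) :
    (gaussianReal m (σ ^ 2).toNNReal).real {x | qdaRule (m + r * σ) (g * σ) m σ x = 1} =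
      (if g ^ 2 - 1 < 0 then 1 else 0)
        + Phi ((r + g * √(qdaDiscrim r g)) / (g ^ 2 - 1))
        - Phi ((r - g * √(qdaDiscrim r g)) / (g ^ 2 - 1)) := by
  have hdisc : r ^ 2 - (g ^ 2 - 1) * (-r ^ 2 - g ^ 2 * Real.log (g ^ 2)) =
      (g * √(qdaDiscrim r g)) ^ 2 := by
    rw [mul_pow, Real.sq_sqrt (qdaDiscrim_nonneg r g), qdaDiscrim]
    ring
  rw [measureReal_gaussianReal_eq_standard _ _ (measurableSet_qdaRule_eq_one _ _ _ _)]
  simp only [mem_ofPred_eq, qdaRule_sub_mul_eq_one_iff_of_class_one hg.ne' hσ]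
  exact measureReal_standardGaussian_ofPred_quadratic_neg (sub_ne_zero.2 hg₁)
    (by positivity) hdisc

lemma classError_add_mul_eq_calE (hg : 0 < g) (hg₁ : g ≠ 1) (hσ : σ ≠ 0) (m : ℝ) :
    classError (m + r * σ) (g * σ) m σ = calE r g := by
  have hg₂ : g ^ 2 ≠ 1 := (pow_eq_one_iff_of_nonneg hg.le two_ne_zero).not.2 hg₁
  rw [classError_eq_measureReal_qdaRule_eq_one,
    measureReal_class_zero_qdaRule_eq_one hg.ne' hg₂ hσ,
    measureReal_class_one_qdaRule_eq_one hg hg₂ hσ, calE_of_ne_one r hg₁]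
  ring

end DecisionRegion

/-- For Gaussian classes with σ₀ ≠ σ₁, the classification error of the 1D QDA rule
equals 𝓔((m₀ − m₁)/σ₁, σ₀/σ₁). -/
theorem error_unequal_variance (m0 m1 σ0 σ1 : ℝ) (h0 : 0 < σ0) (h1 : 0 < σ1)
    (hne : σ0 ≠ σ1) :
    classError m0 σ0 m1 σ1 = calE ((m0 - m1) / σ1) (σ0 / σ1) := by
  have hg : 0 < σ0 / σ1 := div_pos h0 h1
  have hg₁ : σ0 / σ1 ≠ 1 := (div_eq_one_iff_eq h1.ne').not.2 hne
  have hm : m1 + (m0 - m1) / σ1 * σ1 = m0 := by rw [div_mul_cancel₀ _ h1.ne', add_sub_cancel]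
  have hσ : σ0 / σ1 * σ1 = σ0 := div_mul_cancel₀ σ0 h1.ne'
  have herr := classError_add_mul_eq_calE (r := (m0 - m1) / σ1) hg hg₁ h1.ne' m1
  rwa [hm, hσ] at herr
end

section
/- Suppose σ₀ > σ₁ > 0. Then Δ > 0, and the set {x ∈ ℝ : δ₀(x) > δ₁(x)} equals (−∞, r₁) ∪ (r₂, ∞), where r₁ = ((m₁σ₀² − m₀σ₁²) − σ₀σ₁√Δ)/(σ₀² − σ₁²) and r₂ = ((m₁σ₀² − m₀σ₁²) + σ₀σ₁√Δ)/(σ₀² − σ₁²). -/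
open MeasureTheory ProbabilityTheory Matrix Filter Set

/-- The reduced discriminant `Δ` of the quadratic `δ₀ - δ₁`. It is normalized so that the roots
`r₁, r₂` lie at distance `σ₀ σ₁ √Δ / (σ₀² - σ₁²)` from the vertex. -/
noncomputable def qdaDiscriminant (m0 m1 σ0 σ1 : ℝ) : ℝ :=
  (m0 - m1) ^ 2 + (σ0 ^ 2 - σ1 ^ 2) * Real.log (σ0 ^ 2 / σ1 ^ 2)

theorem sub_mul_log_div_pos {a b : ℝ} (ha : 0 < a) (hb : 0 < b) (hab : a ≠ b) :
    0 < (a - b) * Real.log (a / b) := by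
  rcases hab.lt_or_gt with hlt | hgt
  · exact mul_pos_of_neg_of_neg (sub_neg.2 hlt)
      (Real.log_neg (div_pos ha hb) ((div_lt_one hb).2 hlt))
  · exact mul_pos (sub_pos.2 hgt) (Real.log_pos ((one_lt_div hb).2 hgt))

theorem setOf_sq_lt_mul_sub_sq {K : Type*} [Field K] [LinearOrder K] [IsStrictOrderedRing K]
    {a c : K} (ha : 0 < a) (b : K) (hc : 0 ≤ c) :
    {x : K | c ^ 2 < (x * a - b) ^ 2} = Set.Iio ((b - c) / a) ∪ Set.Ioi ((b + c) / a) := by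
  ext x
  calc
    c ^ 2 < (x * a - b) ^ 2 ↔ c < x * a - b ∨ c < -(x * a - b) := by
      rw [sq_lt_sq, abs_of_nonneg hc, lt_abs]
    _ ↔ x * a < b - c ∨ b + c < x * a := by
      rw [or_comm, neg_sub, lt_sub_comm, lt_sub_iff_add_lt' (b := c)]
    _ ↔ x < (b - c) / a ∨ (b + c) / a < x := by
      rw [lt_div_iff₀ ha, div_lt_iff₀ ha]

section Discriminant

variable {σ0 σ1 : ℝ}

theorem qdaDiscriminant_pos (m0 m1 : ℝ) (h0 : σ0 ≠ 0) (h1 : σ1 ≠ 0) (h01 : σ0 ^ 2 ≠ σ1 ^ 2) :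
    0 < qdaDiscriminant m0 m1 σ0 σ1 :=
  add_pos_of_nonneg_of_pos (sq_nonneg _)
    (sub_mul_log_div_pos (sq_pos_of_ne_zero h0) (sq_pos_of_ne_zero h1) h01)

/-- Completing the square, multiplied through by the leading coefficient `σ₀² - σ₁²` of
`2 σ₀² σ₁² (δ₀ - δ₁)`. -/
theorem mul_qdaDelta_sub_qdaDelta (m0 m1 : ℝ) (h0 : σ0 ≠ 0) (h1 : σ1 ≠ 0) (x : ℝ) :
    2 * σ0 ^ 2 * σ1 ^ 2 * (σ0 ^ 2 - σ1 ^ 2) * (qdaDelta m0 σ0 x - qdaDelta m1 σ1 x) =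
      (x * (σ0 ^ 2 - σ1 ^ 2) - (m1 * σ0 ^ 2 - m0 * σ1 ^ 2)) ^ 2 -
        (σ0 * σ1) ^ 2 * qdaDiscriminant m0 m1 σ0 σ1 := by
  have hlog : Real.log (σ0 ^ 2 / σ1 ^ 2) = Real.log (σ0 ^ 2) - Real.log (σ1 ^ 2) :=
    Real.log_div (pow_ne_zero 2 h0) (pow_ne_zero 2 h1)
  rw [qdaDiscriminant, hlog, qdaDelta, qdaDelta]
  field_simp
  ring

theorem qdaDelta_lt_qdaDelta_iff (m0 m1 : ℝ) (h1 : σ1 ≠ 0) (h01 : σ1 ^ 2 < σ0 ^ 2) (x : ℝ) :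
    qdaDelta m1 σ1 x < qdaDelta m0 σ0 x ↔
      (σ0 * σ1) ^ 2 * qdaDiscriminant m0 m1 σ0 σ1 <
        (x * (σ0 ^ 2 - σ1 ^ 2) - (m1 * σ0 ^ 2 - m0 * σ1 ^ 2)) ^ 2 := by
  have h0 : σ0 ≠ 0 := sq_pos_iff.1 ((sq_nonneg σ1).trans_lt h01)
  have hfactor : 0 < 2 * σ0 ^ 2 * σ1 ^ 2 * (σ0 ^ 2 - σ1 ^ 2) :=
    mul_pos (by positivity) (sub_pos.2 h01)
  rw [← sub_pos, ← mul_pos_iff_of_pos_left hfactor, mul_qdaDelta_sub_qdaDelta m0 m1 h0 h1,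
    sub_pos]

end Discriminant

/-- If σ₀ > σ₁ > 0 then Δ > 0 and {x : δ₀(x) > δ₁(x)} = (−∞, r₁) ∪ (r₂, ∞). -/
theorem qda_region (m0 m1 σ0 σ1 : ℝ) (h1 : 0 < σ1) (h01 : σ1 < σ0) :
    0 < (m0 - m1)^2 + (σ0^2 - σ1^2) * Real.log (σ0^2 / σ1^2) ∧
    {x : ℝ | qdaDelta m1 σ1 x < qdaDelta m0 σ0 x} =
      Set.Iio (((m1 * σ0^2 - m0 * σ1^2) -
          σ0 * σ1 * Real.sqrt ((m0 - m1)^2 + (σ0^2 - σ1^2) * Real.log (σ0^2 / σ1^2))) /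
          (σ0^2 - σ1^2)) ∪
      Set.Ioi (((m1 * σ0^2 - m0 * σ1^2) +
          σ0 * σ1 * Real.sqrt ((m0 - m1)^2 + (σ0^2 - σ1^2) * Real.log (σ0^2 / σ1^2))) /
          (σ0^2 - σ1^2)) := by
  have h0 : 0 < σ0 := h1.trans h01
  have hsq : σ1 ^ 2 < σ0 ^ 2 := pow_lt_pow_left₀ h01 h1.le two_ne_zero
  have hΔ : 0 < qdaDiscriminant m0 m1 σ0 σ1 := qdaDiscriminant_pos m0 m1 h0.ne' h1.ne' hsq.ne'
  have hroot : 0 ≤ σ0 * σ1 * √(qdaDiscriminant m0 m1 σ0 σ1) := by positivity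
  refine ⟨hΔ, ?_⟩
  calc
    {x | qdaDelta m1 σ1 x < qdaDelta m0 σ0 x} =
        {x | (σ0 * σ1 * √(qdaDiscriminant m0 m1 σ0 σ1)) ^ 2 <
          (x * (σ0 ^ 2 - σ1 ^ 2) - (m1 * σ0 ^ 2 - m0 * σ1 ^ 2)) ^ 2} := by
      simp only [qdaDelta_lt_qdaDelta_iff m0 m1 h1.ne' hsq, mul_pow _ √_, Real.sq_sqrt hΔ.le]
    _ = _ := setOf_sq_lt_mul_sub_sq (sub_pos.2 hsq) _ hroot
end

section
/- The function 𝓔 : ℝ × (0, ∞) → ℝ is continuous on its entire domain ℝ × (0, ∞) (in particular, it is continuous at every point of the line g = 1). -/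
open MeasureTheory ProbabilityTheory Matrix Filter Set

/-!
`calE r g` is the Bayes error for deciding between `N(0, 1)` and `N(r, g²)` with equal priors. For
`g ≠ 1` the two densities cross at two points, and each crossing contributes half the gap between
the two tail probabilities beyond it; the crossings are exchanged by `r ↦ -r` together with
reflection. As `g → 1` with `r > 0`, one crossing tends to the midpoint `r / 2`, while the other
escapes to infinity. The standardizations of the latter under the two laws differ by
`(√Δ - r) / (g + 1)`, which tends to `0`, so uniform continuity of `Phi` makes its gap vanish.
At `r = 0` this argument applies to both crossings.
-/

open scoped Topology NNReal

section RealMeasure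

variable {μ : Measure ℝ}

theorem lipschitzWith_measureReal_Iic [IsFiniteMeasure μ] {K : ℝ≥0} (hμ : μ ≤ K • volume) :
    LipschitzWith K fun x ↦ μ.real (Iic x) := by
  refine LipschitzWith.of_le_add_mul K fun x y ↦ ?_
  have hIoc : μ.real (Ioc y x) ≤ K * dist x y := by
    refine ENNReal.toReal_le_of_le_ofReal (by positivity) ((hμ (Ioc y x)).trans ?_)
    rw [Measure.smul_apply, Real.volume_Ioc, ENNReal.ofReal_mul K.coe_nonneg,
      ENNReal.ofReal_coe_nnreal]
    exact mul_le_mul_right (ENNReal.ofReal_le_ofReal (le_abs_self _)) _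
  calc μ.real (Iic x) ≤ μ.real (Iic y ∪ Ioc y x) := measureReal_mono Iic_subset_Iic_union_Ioc
    _ ≤ μ.real (Iic y) + μ.real (Ioc y x) := measureReal_union_le _ _
    _ ≤ μ.real (Iic y) + K * dist x y := by gcongr

theorem measureReal_Iic_neg [IsProbabilityMeasure μ] [NullSingletonClass μ] [μ.IsNegInvariant]
    (x : ℝ) : μ.real (Iic (-x)) = 1 - μ.real (Iic x) := by
  have hreflect : μ (Iic (-x)) = μ (Ici x) := by
    rw [← Set.neg_Ici, Measure.measure_neg]
  rw [← probReal_compl_eq_one_sub measurableSet_Iic, compl_Iic, measureReal_def, hreflect,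
    measureReal_def, measure_congr Ioi_ae_eq_Ici]

end RealMeasure

section Gaussian

theorem gaussianPDFReal_le_inv_sqrt (m : ℝ) (v : ℝ≥0) (x : ℝ) :
    gaussianPDFReal m v x ≤ (√(2 * Real.pi * v))⁻¹ := by
  rw [gaussianPDFReal]
  refine mul_le_of_le_one_right (by positivity) (Real.exp_le_one_iff.2 ?_)
  exact div_nonpos_of_nonpos_of_nonneg (neg_nonpos.2 (sq_nonneg _)) (by positivity)

theorem gaussianReal_le_smul_volume (m : ℝ) {v : ℝ≥0} (hv : v ≠ 0) :
    gaussianReal m v ≤ (√(2 * Real.pi * v))⁻¹.toNNReal • volume := by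
  rw [gaussianReal_of_var_ne_zero m hv]
  calc volume.withDensity (gaussianPDF m v)
      ≤ volume.withDensity fun _ ↦ ENNReal.ofReal (√(2 * Real.pi * v))⁻¹ :=
        withDensity_mono <| ae_of_all _ fun x ↦
          ENNReal.ofReal_le_ofReal (gaussianPDFReal_le_inv_sqrt m v x)
    _ = _ := withDensity_const _

instance isNegInvariant_gaussianReal (v : ℝ≥0) : (gaussianReal 0 v).IsNegInvariant :=
  ⟨gaussianReal_map_neg.trans (by rw [neg_zero])⟩

theorem uniformContinuous_Phi : UniformContinuous Phi :=
  (lipschitzWith_measureReal_Iic (gaussianReal_le_smul_volume 0 one_ne_zero)).uniformContinuous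

@[fun_prop]
theorem continuous_Phi : Continuous Phi :=
  uniformContinuous_Phi.continuous

theorem Phi_neg (x : ℝ) : Phi (-x) = 1 - Phi x :=
  have : NullSingletonClass (gaussianReal 0 1) := nullSingletonClass_gaussianReal one_ne_zero
  measureReal_Iic_neg x

theorem Phi_zero : Phi 0 = 1 / 2 := by
  have h := Phi_neg 0
  rw [neg_zero] at h
  linarith

end Gaussian

theorem tendsto_comp_sub_comp_of_uniformContinuous {α G H : Type*}
    [AddGroup G] [UniformSpace G] [IsUniformAddGroup G]
    [AddGroup H] [UniformSpace H] [IsUniformAddGroup H]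
    {f : G → H} (hf : UniformContinuous f) {l : Filter α} {u v : α → G}
    (huv : Tendsto (fun x ↦ u x - v x) l (𝓝 0)) :
    Tendsto (fun x ↦ f (u x) - f (v x)) l (𝓝 0) := by
  have hpair : Tendsto (fun x ↦ (v x, u x)) l (uniformity G) := by
    rwa [uniformity_eq_comap_nhds_zero, tendsto_comap_iff]
  have himage := Tendsto.comp hf hpair
  rwa [uniformity_eq_comap_nhds_zero, tendsto_comap_iff] at himage

section Threshold

variable {r g : ℝ}

/-- The discriminant `Δ(r, g)`, without the factor `4 * g ^ 2`, of the quadratic equation for the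
points at which the densities of `N(0, 1)` and `N(r, g²)` agree. -/
noncomputable def bayesDiscrim (r g : ℝ) : ℝ := r ^ 2 + (g ^ 2 - 1) * Real.log (g ^ 2)

/-- A point at which the densities of `N(0, 1)` and `N(r, g²)` agree, for `g ∉ {0, 1, -1}`; the
other one is `-threshold (-r) g`. -/
noncomputable def threshold (r g : ℝ) : ℝ := (g * √(bayesDiscrim r g) - r) / (g ^ 2 - 1)

/-- The difference `P(X > t) - P(Y > t)` of the tails of `X ∼ N(0, 1)` and `Y ∼ N(r, g²)` beyond
`t = threshold r g`, for `g > 0`. -/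
noncomputable def tailGap (r g : ℝ) : ℝ :=
  Phi (-threshold r g) - Phi (-((threshold r g - r) / g))

theorem bayesDiscrim_neg (r g : ℝ) : bayesDiscrim (-r) g = bayesDiscrim r g := by
  rw [bayesDiscrim, bayesDiscrim, neg_sq]

theorem bayesDiscrim_one (r : ℝ) : bayesDiscrim r 1 = r ^ 2 := by
  simp [bayesDiscrim]

theorem sqrt_bayesDiscrim_one (r : ℝ) : √(bayesDiscrim r 1) = |r| := by
  rw [bayesDiscrim_one, Real.sqrt_sq_eq_abs]

theorem threshold_sub_div (hg0 : g ≠ 0) (hg1 : g ^ 2 ≠ 1) :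
    (threshold r g - r) / g = (√(bayesDiscrim r g) - r * g) / (g ^ 2 - 1) := by
  have hden : g ^ 2 - 1 ≠ 0 := sub_ne_zero.2 hg1
  rw [threshold]
  field_simp
  ring

theorem threshold_sub_threshold_sub_div (hg0 : g ≠ 0) (hg1 : g ^ 2 ≠ 1) :
    threshold r g - (threshold r g - r) / g = (r + √(bayesDiscrim r g)) / (g + 1) := by
  have hden : g ^ 2 - 1 ≠ 0 := sub_ne_zero.2 hg1
  have hadd : g + 1 ≠ 0 := fun h ↦ hden (by linear_combination (g - 1) * h)
  rw [threshold_sub_div hg0 hg1, threshold, ← sub_div, div_eq_div_iff hden hadd]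
  ring

-- Rationalizing the numerator cancels the factor `g ^ 2 - 1`.
theorem threshold_eq_div (hg1 : g ^ 2 ≠ 1) (hΔ : 0 ≤ bayesDiscrim r g)
    (hden : g * √(bayesDiscrim r g) + r ≠ 0) :
    threshold r g =
      (r ^ 2 + g ^ 2 * Real.log (g ^ 2)) / (g * √(bayesDiscrim r g) + r) := by
  have hsq : √(bayesDiscrim r g) ^ 2 = r ^ 2 + (g ^ 2 - 1) * Real.log (g ^ 2) := Real.sq_sqrt hΔ
  rw [threshold, div_eq_div_iff (sub_ne_zero.2 hg1) hden]
  linear_combination g ^ 2 * hsq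

theorem calE_eq_add_tailGap (hg0 : g ≠ 0) (hg1 : g ^ 2 ≠ 1) :
    calE r g = 1 / 2 + 1 / 2 * tailGap r g + 1 / 2 * tailGap (-r) g := by
  have hne : g ≠ 1 := by rintro rfl; exact hg1 (one_pow 2)
  have hthreshold : -threshold r g = (r - g * √(bayesDiscrim r g)) / (g ^ 2 - 1) := by
    rw [threshold]; ring
  have hscore :
      -((threshold r g - r) / g) = (r * g - √(bayesDiscrim r g)) / (g ^ 2 - 1) := by
    rw [threshold_sub_div hg0 hg1]; ring
  have hthreshold_neg : threshold (-r) g = (r + g * √(bayesDiscrim r g)) / (g ^ 2 - 1) := by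
    rw [threshold, bayesDiscrim_neg]; ring
  have hscore_neg :
      (threshold (-r) g - -r) / g = (r * g + √(bayesDiscrim r g)) / (g ^ 2 - 1) := by
    rw [threshold_sub_div hg0 hg1, bayesDiscrim_neg]; ring
  rw [tailGap, tailGap, hthreshold, hscore, Phi_neg (threshold (-r) g),
    Phi_neg ((threshold (-r) g - -r) / g), hscore_neg, hthreshold_neg, calE, if_neg hne]
  simp only [bayesDiscrim]
  ring

end Threshold

section Continuity

variable {r g : ℝ}

theorem continuousAt_bayesDiscrim (hg0 : g ≠ 0) :
    ContinuousAt (fun q : ℝ × ℝ ↦ bayesDiscrim q.1 q.2) (r, g) := by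
  have hsq : g ^ 2 ≠ 0 := pow_ne_zero 2 hg0
  unfold bayesDiscrim
  fun_prop (disch := exact hsq)

theorem continuousAt_tailGap (hg0 : g ≠ 0) (hg1 : g ^ 2 ≠ 1) :
    ContinuousAt (fun q : ℝ × ℝ ↦ tailGap q.1 q.2) (r, g) := by
  have hΔ := continuousAt_bayesDiscrim (r := r) hg0
  have hden : g ^ 2 - 1 ≠ 0 := sub_ne_zero.2 hg1
  unfold tailGap threshold
  fun_prop (disch := assumption)

theorem continuousAt_calE (hg0 : g ≠ 0) (hg1 : g ^ 2 ≠ 1) :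
    ContinuousAt (fun q : ℝ × ℝ ↦ calE q.1 q.2) (r, g) := by
  have hneg : ContinuousAt (fun q : ℝ × ℝ ↦ tailGap (-q.1) q.2) (r, g) :=
    ContinuousAt.comp (x := (r, g)) (f := fun q : ℝ × ℝ ↦ (-q.1, q.2))
      (continuousAt_tailGap hg0 hg1) (by fun_prop)
  have hsum : ContinuousAt
      (fun q : ℝ × ℝ ↦ 1 / 2 + 1 / 2 * tailGap q.1 q.2 + 1 / 2 * tailGap (-q.1) q.2) (r, g) := by
    have hgap := continuousAt_tailGap (r := r) hg0 hg1
    fun_prop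
  refine hsum.congr ?_
  filter_upwards [continuousAt_snd.eventually_ne hg0,
    (continuousAt_snd.pow 2).eventually_ne hg1] with q hq0 hq1
  exact (calE_eq_add_tailGap hq0 hq1).symm

theorem eventually_ne_zero_and_sq_ne_one (r : ℝ) :
    ∀ᶠ q : ℝ × ℝ in 𝓝[{q | q.2 ≠ 1}] (r, 1), q.2 ≠ 0 ∧ q.2 ^ 2 ≠ 1 := by
  have hpos : ∀ᶠ q : ℝ × ℝ in 𝓝 (r, 1), 0 < q.2 := continuousAt_snd.eventually_const_lt one_pos
  filter_upwards [nhdsWithin_le_nhds hpos, self_mem_nhdsWithin] with q hq hq1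
  exact ⟨hq.ne', (pow_eq_one_iff_of_nonneg hq.le two_ne_zero).not.2 hq1⟩

theorem tendsto_threshold_sub_threshold_sub_div (r : ℝ) :
    Tendsto (fun q : ℝ × ℝ ↦ threshold q.1 q.2 - (threshold q.1 q.2 - q.1) / q.2)
      (𝓝[{q | q.2 ≠ 1}] (r, 1)) (𝓝 ((r + |r|) / 2)) := by
  have hcont : ContinuousAt
      (fun q : ℝ × ℝ ↦ (q.1 + √(bayesDiscrim q.1 q.2)) / (q.2 + 1)) (r, 1) := by
    have hΔ := continuousAt_bayesDiscrim (r := r) one_ne_zero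
    have hden : (1 : ℝ) + 1 ≠ 0 := by norm_num
    fun_prop (disch := exact hden)
  have hlim := hcont.tendsto.mono_left (nhdsWithin_le_nhds (s := {q | q.2 ≠ 1}))
  rw [sqrt_bayesDiscrim_one, one_add_one_eq_two] at hlim
  refine hlim.congr' ?_
  filter_upwards [eventually_ne_zero_and_sq_ne_one r] with q ⟨hq0, hq1⟩
  exact (threshold_sub_threshold_sub_div hq0 hq1).symm

theorem tendsto_threshold_of_pos (hr : 0 < r) :
    Tendsto (fun q : ℝ × ℝ ↦ threshold q.1 q.2) (𝓝[{q | q.2 ≠ 1}] (r, 1)) (𝓝 (r / 2)) := by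
  have hΔ := continuousAt_bayesDiscrim (r := r) one_ne_zero
  have hden : ContinuousAt (fun q : ℝ × ℝ ↦ q.2 * √(bayesDiscrim q.1 q.2) + q.1) (r, 1) := by
    fun_prop
  have hden_eq : 1 * √(bayesDiscrim r 1) + r = 2 * r := by
    rw [sqrt_bayesDiscrim_one, abs_of_pos hr]; ring
  have hden_ne : 1 * √(bayesDiscrim r 1) + r ≠ 0 := by rw [hden_eq]; positivity
  have hnum : ContinuousAt (fun q : ℝ × ℝ ↦ q.1 ^ 2 + q.2 ^ 2 * Real.log (q.2 ^ 2)) (r, 1) := by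
    have hsq : (1 : ℝ) ^ 2 ≠ 0 := by norm_num
    fun_prop (disch := exact hsq)
  have hlim := (hnum.div hden hden_ne).tendsto.mono_left
    (nhdsWithin_le_nhds (s := {q | q.2 ≠ 1}))
  have hvalue :
      (r ^ 2 + 1 ^ 2 * Real.log (1 ^ 2)) / (1 * √(bayesDiscrim r 1) + r) = r / 2 := by
    rw [hden_eq, one_pow, Real.log_one]
    field_simp
    ring
  have hΔ_pos : 0 < bayesDiscrim r 1 := by rw [bayesDiscrim_one]; positivity
  simp only [Pi.div_apply, hvalue] at hlim
  refine hlim.congr' ?_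
  filter_upwards [eventually_ne_zero_and_sq_ne_one r,
    nhdsWithin_le_nhds (hΔ.eventually_const_lt hΔ_pos),
    nhdsWithin_le_nhds (hden.eventually_ne hden_ne)] with q hq hqΔ hq_den
  exact (threshold_eq_div hq.2 hqΔ.le hq_den).symm

theorem tendsto_tailGap_of_nonpos (hr : r ≤ 0) :
    Tendsto (fun q : ℝ × ℝ ↦ tailGap q.1 q.2) (𝓝[{q | q.2 ≠ 1}] (r, 1)) (𝓝 0) := by
  refine tendsto_comp_sub_comp_of_uniformContinuous uniformContinuous_Phi ?_
  have hshift := (tendsto_threshold_sub_threshold_sub_div r).neg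
  rw [abs_of_nonpos hr, add_neg_cancel, zero_div, neg_zero] at hshift
  refine hshift.congr fun q ↦ ?_
  ring

theorem tendsto_tailGap_of_pos (hr : 0 < r) :
    Tendsto (fun q : ℝ × ℝ ↦ tailGap q.1 q.2) (𝓝[{q | q.2 ≠ 1}] (r, 1))
      (𝓝 (1 - 2 * Phi (r / 2))) := by
  have hthreshold := tendsto_threshold_of_pos hr
  have hscore : Tendsto (fun q : ℝ × ℝ ↦ (threshold q.1 q.2 - q.1) / q.2)
      (𝓝[{q | q.2 ≠ 1}] (r, 1)) (𝓝 (-(r / 2))) := by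
    have hsub := hthreshold.sub (tendsto_threshold_sub_threshold_sub_div r)
    rw [abs_of_pos hr, show r / 2 - (r + r) / 2 = -(r / 2) by ring] at hsub
    exact hsub.congr fun q ↦ sub_sub_cancel _ _
  have hgap := ((continuous_Phi.tendsto _).comp hthreshold.neg).sub
    ((continuous_Phi.tendsto _).comp hscore.neg)
  rwa [neg_neg, Phi_neg, show 1 - Phi (r / 2) - Phi (r / 2) = 1 - 2 * Phi (r / 2) by ring] at hgap

theorem tendsto_tailGap (r : ℝ) :
    Tendsto (fun q : ℝ × ℝ ↦ tailGap q.1 q.2) (𝓝[{q | q.2 ≠ 1}] (r, 1))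
      (𝓝 (1 - 2 * Phi (max r 0 / 2))) := by
  rcases le_or_gt r 0 with hr | hr
  · rw [max_eq_right hr, zero_div, Phi_zero, mul_one_div_cancel two_ne_zero, sub_self]
    exact tendsto_tailGap_of_nonpos hr
  · rw [max_eq_left hr.le]
    exact tendsto_tailGap_of_pos hr

theorem Phi_neg_abs_div_two (r : ℝ) :
    Phi (-(|r| / 2)) = 1 / 2 + 1 / 2 * (1 - 2 * Phi (max r 0 / 2))
      + 1 / 2 * (1 - 2 * Phi (max (-r) 0 / 2)) := by
  rw [Phi_neg]
  rcases le_total r 0 with hr | hr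
  · rw [abs_of_nonpos hr, max_eq_right hr, max_eq_left (neg_nonneg.2 hr), zero_div, Phi_zero]
    ring
  · rw [abs_of_nonneg hr, max_eq_left hr, max_eq_right (neg_nonpos.2 hr), zero_div, Phi_zero]
    ring

theorem calE_one (r : ℝ) : calE r 1 = Phi (-(|r| / 2)) := if_pos rfl

theorem tendsto_calE_nhdsWithin_ne_one (r : ℝ) :
    Tendsto (fun q : ℝ × ℝ ↦ calE q.1 q.2) (𝓝[{q | q.2 ≠ 1}] (r, 1)) (𝓝 (calE r 1)) := by
  have hreflect : Tendsto (fun q : ℝ × ℝ ↦ (-q.1, q.2)) (𝓝[{q | q.2 ≠ 1}] (r, 1))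
      (𝓝[{q | q.2 ≠ 1}] (-r, 1)) := by
    have hcont : Continuous fun q : ℝ × ℝ ↦ (-q.1, q.2) := by fun_prop
    exact hcont.continuousWithinAt.tendsto_nhdsWithin fun q hq ↦ hq
  rw [calE_one, Phi_neg_abs_div_two]
  refine ((((tendsto_tailGap r).const_mul (1 / 2)).const_add (1 / 2)).add
    (((tendsto_tailGap (-r)).comp hreflect).const_mul (1 / 2))).congr' ?_
  filter_upwards [eventually_ne_zero_and_sq_ne_one r] with q ⟨hq0, hq1⟩
  exact (calE_eq_add_tailGap hq0 hq1).symm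

theorem tendsto_calE_nhdsWithin_eq_one (r : ℝ) :
    Tendsto (fun q : ℝ × ℝ ↦ calE q.1 q.2) (𝓝[{q | q.2 = 1}] (r, 1)) (𝓝 (calE r 1)) := by
  have hcont : Continuous fun q : ℝ × ℝ ↦ calE q.1 1 := by
    simp only [calE_one]
    fun_prop
  refine (hcont.tendsto (r, 1)).mono_left nhdsWithin_le_nhds |>.congr' ?_
  filter_upwards [self_mem_nhdsWithin] with q (hq : q.2 = 1)
  rw [hq]

theorem continuousAt_calE_one (r : ℝ) :
    ContinuousAt (fun q : ℝ × ℝ ↦ calE q.1 q.2) (r, 1) := by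
  have hunion := ContinuousWithinAt.union (tendsto_calE_nhdsWithin_eq_one r)
    (tendsto_calE_nhdsWithin_ne_one r)
  rwa [show {q : ℝ × ℝ | q.2 = 1} ∪ {q | q.2 ≠ 1} = univ from union_compl_self _,
    continuousWithinAt_univ] at hunion

end Continuity

/-- 𝓔 is continuous on ℝ × (0, ∞). -/
theorem calE_continuousOn :
    ContinuousOn (fun q : ℝ × ℝ => calE q.1 q.2) {q : ℝ × ℝ | 0 < q.2} := by
  rintro ⟨r, g⟩ (hg : 0 < g)
  refine ContinuousAt.continuousWithinAt ?_
  rcases eq_or_ne g 1 with rfl | hg1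
  · exact continuousAt_calE_one r
  · exact continuousAt_calE hg.ne' ((pow_eq_one_iff_of_nonneg hg.le two_ne_zero).not.2 hg1)
end
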